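/- The number 211 + 2^448 is prime. -/

import Mathlib

/-- `a ^ e % n` by binary exponentiation on the lowest `k` bits of `e`. -/
def powModBits (n a : ℕ) : ℕ → ℕ → ℕ
  | 0, _ => 1
  | k + 1, e => (a ^ (e % 2) * powModBits n a k (e / 2) ^ 2) % n

theorem powModBits_modEq (n a : ℕ) {k e : ℕ} (he : e < 2 ^ k) :
    powModBits n a k e ≡ a ^ e [MOD n] := by
  induction k generalizing e with
  | zero =>
    obtain rfl : e = 0 := by simpa using he
    exact Nat.ModEq.refl 1
  | succ k ih =>
    have ih' := ih (e := e / 2) (by rw [pow_succ] at he; omega)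
    calc powModBits n a (k + 1) e
        ≡ a ^ (e % 2) * powModBits n a k (e / 2) ^ 2 [MOD n] := Nat.mod_modEq _ _
      _ ≡ a ^ (e % 2) * (a ^ (e / 2)) ^ 2 [MOD n] := (ih'.pow 2).mul_left _
      _ = a ^ e := by rw [← pow_mul, ← pow_add]; congr 1; omega

/-- `a ^ e % n`, computed by binary exponentiation. -/
def powMod (n a e : ℕ) : ℕ := powModBits n a (e.log2 + 1) e

theorem powMod_modEq (n a e : ℕ) : powMod n a e ≡ a ^ e [MOD n] :=
  powModBits_modEq n a Nat.lt_log2_self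

/-- A Pocklington witness: `a` has order dividing `n - 1` modulo `n`, and for every `r ∈ l`
the number `a ^ ((n - 1) / r) - 1` is a unit modulo `n`. -/
def IsPocklingtonWitness (n a : ℕ) (l : List ℕ) : Prop :=
  1 < n ∧ powMod n a (n - 1) = 1 ∧ l.Nodup ∧
    ∀ r ∈ l, r ∣ n - 1 ∧ Nat.gcd (powMod n a ((n - 1) / r) + (n - 1)) n = 1

instance (n a : ℕ) (l : List ℕ) : Decidable (IsPocklingtonWitness n a l) := by
  unfold IsPocklingtonWitness; infer_instance

theorem List.prod_dvd_of_prime_of_nodup {l : List ℕ} {m : ℕ} (hl : ∀ r ∈ l, r.Prime)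
    (hnd : l.Nodup) (hm : ∀ r ∈ l, r ∣ m) : l.prod ∣ m := by
  have h := Finset.prod_primes_dvd (s := l.toFinset) m
    (fun r hr => (hl r (List.mem_toFinset.1 hr)).prime)
    (fun r hr => hm r (List.mem_toFinset.1 hr))
  rwa [List.prod_toFinset _ hnd, List.map_id'] at h

namespace IsPocklingtonWitness

variable {n a : ℕ} {l : List ℕ}

theorem dvd_sub_one (h : IsPocklingtonWitness n a l) {p r : ℕ} (hp : p.Prime) (hpn : p ∣ n)
    (hrl : r ∈ l) (hr : r.Prime) : r ∣ p - 1 := by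
  obtain ⟨hn, hpow, -, hl⟩ := h
  obtain ⟨⟨m, hm⟩, hgcd⟩ := hl r hrl
  have := Fact.mk hp
  rw [hm, Nat.mul_div_cancel_left _ hr.pos, ← hm] at hgcd
  have cast_powMod (e : ℕ) : ((powMod n a e : ℕ) : ZMod p) = (a : ZMod p) ^ e := by
    rw [← Nat.cast_pow, ZMod.natCast_eq_natCast_iff]
    exact (powMod_modEq n a e).of_dvd hpn
  have hone : (a : ZMod p) ^ (n - 1) = 1 := by rw [← cast_powMod, hpow, Nat.cast_one]
  have hne : (a : ZMod p) ^ m ≠ 1 := by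
    intro hm1
    have hdvd : p ∣ powMod n a m + (n - 1) := by
      rw [← ZMod.natCast_eq_zero_iff, Nat.cast_add, cast_powMod, hm1, ← Nat.cast_one,
        ← Nat.cast_add, ZMod.natCast_eq_zero_iff]
      rwa [Nat.add_sub_cancel' hn.le]
    exact hp.one_lt.ne' (Nat.dvd_one.1 (hgcd ▸ Nat.dvd_gcd hdvd hpn))
  have ha : (a : ZMod p) ≠ 0 := by
    intro h0
    rw [h0, zero_pow (by omega)] at hone
    exact zero_ne_one hone
  have hord : r ∣ orderOf (a : ZMod p) := by
    by_contra hnd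
    have hcop := ((Nat.Prime.coprime_iff_not_dvd hr).2 hnd).symm
    exact hne (orderOf_dvd_iff_pow_eq_one.1
      (hcop.dvd_of_dvd_mul_left (hm ▸ orderOf_dvd_of_pow_eq_one hone)))
  exact hord.trans (orderOf_dvd_of_pow_eq_one (ZMod.pow_card_sub_one_eq_one ha))

theorem prod_dvd_sub_one (h : IsPocklingtonWitness n a l) (hl : ∀ r ∈ l, r.Prime) {p : ℕ}
    (hp : p.Prime) (hpn : p ∣ n) : l.prod ∣ p - 1 :=
  List.prod_dvd_of_prime_of_nodup hl h.2.2.1 fun r hr => h.dvd_sub_one hp hpn hr (hl r hr)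

/-- **Pocklington's criterion**. -/
theorem prime (h : IsPocklingtonWitness n a l) (hl : ∀ r ∈ l, r.Prime)
    (hn : n < (l.prod + 1) ^ 2) : n.Prime := by
  by_contra hnp
  have hp := Nat.minFac_prime h.1.ne'
  have hle := Nat.le_of_dvd (by have := hp.two_le; omega)
    (h.prod_dvd_sub_one hl hp n.minFac_dvd)
  have hsq := Nat.minFac_sq_le_self (by have := h.1; omega) hnp
  have : l.prod + 1 ≤ n.minFac := by have := hp.two_le; omega
  exact absurd (hn.trans_le (Nat.pow_le_pow_left this 2)) hsq.not_gt

/-- The refinement of Pocklington's criterion by Brillhart, Lehmer and Selfridge, in which the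
factored part of `n - 1` only has to exceed the cube root of `n`. -/
theorem prime_of_not_isSquare (h : IsPocklingtonWitness n a l) (hl : ∀ r ∈ l, r.Prime)
    {s t : ℕ} (hn : n = (s * l.prod + t) * l.prod + 1) (ht : t < l.prod) (hs : s + 1 < l.prod)
    (hsq : ¬ IsSquare (t * t - 4 * s)) : n.Prime := by
  by_contra hnp
  set F := l.prod
  have hp := Nat.minFac_prime h.1.ne'
  obtain ⟨b, hb⟩ : F ∣ n.minFac - 1 := h.prod_dvd_sub_one hl hp n.minFac_dvd
  obtain ⟨m, hm⟩ := n.minFac_dvd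
  have hpb : n.minFac = F * b + 1 := by have := hp.two_le; omega
  have hb0 : 0 < b := by
    rcases Nat.eq_zero_or_pos b with rfl | hb0
    · have := hp.two_le; simp at hpb; omega
    · exact hb0
  have hm1 : 1 < m := by
    rcases m with _ | _ | m
    · have := h.1; omega
    · exact absurd (by rw [hm]; simpa using hp) hnp
    · omega
  rw [hpb] at hm
  obtain ⟨c, hc⟩ : F ∣ m - 1 := by
    have h1 : F ∣ F * (b * m) + (m - 1) := by
      refine ⟨s * F + t, ?_⟩
      have : (F * b + 1) * m = F * (b * m) + m := by ring
      have : F * (s * F + t) = (s * F + t) * F := by ring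
      omega
    exact (Nat.dvd_add_right (Dvd.intro _ rfl)).1 h1
  have hmc : m = F * c + 1 := by omega
  have hc0 : 0 < c := by
    rcases Nat.eq_zero_or_pos c with rfl | hc0
    · simp at hmc; omega
    · exact hc0
  have hF : 0 < F := by omega
  have key : b * c * F + (b + c) = s * F + t := by
    apply Nat.eq_of_mul_eq_mul_right hF
    rw [hmc, hn] at hm
    linarith
  have hbc : b * c ≤ s := by
    by_contra! hlt
    have : (s + 1) * F ≤ b * c * F := Nat.mul_le_mul_right F hlt
    linarith
  have hsum : b + c < F := by nlinarith
  have hst : b * c = s := by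
    have h1 : (b + c + F * (b * c)) / F = (t + F * s) / F := by congr 1; linarith
    rwa [Nat.add_mul_div_left _ _ hF, Nat.add_mul_div_left _ _ hF, Nat.div_eq_of_lt hsum,
      Nat.div_eq_of_lt ht, zero_add, zero_add] at h1
  have htt : b + c = t := by rw [hst] at key; omega
  apply hsq
  subst hst htt
  rcases le_total b c with hle | hle <;> obtain ⟨d, rfl⟩ := Nat.exists_eq_add_of_le hle
  · exact ⟨d, Nat.sub_eq_of_eq_add (by ring)⟩
  · exact ⟨d, Nat.sub_eq_of_eq_add (by ring)⟩

end IsPocklingtonWitness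

theorem prime_3139257421 : Nat.Prime 3139257421 :=
  IsPocklingtonWitness.prime (a := 18) (l := [263, 5101]) (by decide +kernel)
    (by simp only [List.forall_mem_cons]; norm_num) (by norm_num)

theorem prime_14445076973 : Nat.Prime 14445076973 :=
  IsPocklingtonWitness.prime (a := 2) (l := [12325151]) (by decide +kernel)
    (by simp only [List.forall_mem_cons]; norm_num) (by norm_num)

theorem prime_1107518120153 : Nat.Prime 1107518120153 :=
  IsPocklingtonWitness.prime (a := 3) (l := [2203, 260753]) (by decide +kernel)
    (by simp only [List.forall_mem_cons]; norm_num) (by norm_num)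

theorem prime_3935932240641481 : Nat.Prime 3935932240641481 :=
  IsPocklingtonWitness.prime (a := 7) (l := [3821, 27779911]) (by decide +kernel)
    (by simp only [List.forall_mem_cons]; norm_num) (by norm_num)

set_option exponentiation.threshold 500 in
/-- The largest prime factor of `2 ^ 448 + 210 = 2 * 1571 * 51487 * q` is `q`. -/
theorem prime_two_pow_448_add_210_div :
    Nat.Prime ((2 ^ 448 + 210) / (2 * 1571 * 51487)) :=
  IsPocklingtonWitness.prime_of_not_isSquare (a := 2)
    (l := [2, 3, 131, 3139257421, 14445076973, 1107518120153, 3935932240641481])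
    (s := 186122428265507553674834002)
    (t := 85296611165947580944954755818780567514184263555274)
    (by decide +kernel)
    (by
      simp only [List.forall_mem_cons]
      refine ⟨?_, ?_, ?_, prime_3139257421, prime_14445076973, prime_1107518120153,
        prime_3935932240641481, ?_⟩ <;> norm_num)
    (by norm_num) (by norm_num) (by norm_num) (by norm_num)

set_option exponentiation.threshold 500 in
theorem stmt_11 : Nat.Prime (211 + 2 ^ 448) := by
  refine IsPocklingtonWitness.prime (a := 2) (l := [(2 ^ 448 + 210) / (2 * 1571 * 51487)])
    (by decide +kernel) ?_ (by norm_num)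
  simpa only [List.forall_mem_singleton] using prime_two_pow_448_add_210_div
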